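/- arXiv:1604.04609 — 2 statements merged into one kernel-verified Lean document; each statement's English description precedes it below -/
import Mathlib

section
/- Let X be a Tychonoff space with a countable π-base. Then C_ph(X) is separable if and only if X is separable submetrizable and has a countable π-network consisting of 𝓘-sets. -/
open TopologicalSpace Set Topology

/-- The point-open topology `p` on `C(X, ℝ)`. -/
def pointOpenTopology (X : Type*) [TopologicalSpace X] : TopologicalSpace C(X, ℝ) :=
  generateFrom {S | ∃ (x : X) (U : Set ℝ), IsOpen U ∧ S = {f : C(X, ℝ) | f x ∈ U}}

/-- The open-point topology `h` on `C(X, ℝ)`. -/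
def openPointTopology (X : Type*) [TopologicalSpace X] : TopologicalSpace C(X, ℝ) :=
  generateFrom {S | ∃ (V : Set X) (r : ℝ), IsOpen V ∧ S = {f : C(X, ℝ) | ∃ x ∈ V, f x = r}}

/-- The bi-point-open topology `ph` on `C(X, ℝ)`: generated by both kinds of subbasic sets. -/
def biPointOpenTopology (X : Type*) [TopologicalSpace X] : TopologicalSpace C(X, ℝ) :=
  generateFrom
    ({S | ∃ (x : X) (U : Set ℝ), IsOpen U ∧ S = {f : C(X, ℝ) | f x ∈ U}} ∪
     {S | ∃ (V : Set X) (r : ℝ), IsOpen V ∧ S = {f : C(X, ℝ) | ∃ x ∈ V, f x = r}})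

/-- The dispersion character: minimum cardinality of a nonempty open subset. -/
noncomputable def dispersionCharacter (X : Type*) [TopologicalSpace X] : Cardinal :=
  sInf {c | ∃ U : Set X, IsOpen U ∧ U.Nonempty ∧ c = Cardinal.mk U}

/-- A π-network: a family of nonempty subsets such that every nonempty open set contains one. -/
def IsPiNetwork {X : Type*} [TopologicalSpace X] (γ : Set (Set X)) : Prop :=
  (∀ A ∈ γ, A.Nonempty) ∧ ∀ U : Set X, IsOpen U → U.Nonempty → ∃ A ∈ γ, A ⊆ U

/-- A π-base: a family of nonempty open subsets such that every nonempty open set contains one. -/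
def IsPiBase {X : Type*} [TopologicalSpace X] (γ : Set (Set X)) : Prop :=
  (∀ A ∈ γ, IsOpen A ∧ A.Nonempty) ∧ ∀ U : Set X, IsOpen U → U.Nonempty → ∃ A ∈ γ, A ⊆ U

/-- A network. -/
def IsNetwork {X : Type*} [TopologicalSpace X] (𝒩 : Set (Set X)) : Prop :=
  ∀ (x : X) (U : Set X), IsOpen U → x ∈ U → ∃ N ∈ 𝒩, x ∈ N ∧ N ⊆ U

/-- An 𝓘-set. -/
def IsISet {X : Type*} [TopologicalSpace X] (A : Set X) : Prop :=
  ∃ (f : X → ℝ) (a b : ℝ), Continuous f ∧ a < b ∧ Icc a b ⊆ f '' A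

/-- A T₀-separating family. -/
def T0Separating {X : Type*} (γ : Set (Set X)) : Prop :=
  ∀ x y : X, x ≠ y → ∃ V ∈ γ, (x ∈ V ∧ y ∉ V) ∨ (y ∈ V ∧ x ∉ V)

/-- A zero-set. -/
def IsZeroSet {X : Type*} [TopologicalSpace X] (Z : Set X) : Prop :=
  ∃ f : X → ℝ, Continuous f ∧ Z = f ⁻¹' {0}

/-- Separable submetrizable: admits a coarser separable metrizable topology. -/
def SeparableSubmetrizable (X : Type*) [t : TopologicalSpace X] : Prop :=
  ∃ t' : TopologicalSpace X, (∀ U : Set X, IsOpen[t'] U → IsOpen[t] U) ∧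
    @SeparableSpace X t' ∧ @MetrizableSpace X t'

/-- Hypothesis (M). -/
def HypothesisM : Prop :=
  ∀ A : Set ℝ, Cardinal.mk A = Cardinal.continuum →
    ∃ f : A → ℝ, Continuous f ∧ Set.range f = Icc (0 : ℝ) 1

/- The two directions meet in countable families `G` of continuous functions that attain every real
value on every nonempty open set. A countable dense subset of `C_ph(X)` is such a family, and this
makes every nonempty open set `U` an 𝓘-set: choose `P : C(ℝ, [0, 1]^G)` onto the cube; if each
`x ↦ P (g x) g` omitted a value `t g` on `U`, then a real `c` with `P c = t` would not be attained
on `U` by any member of `G`. Conversely, translates of one function mapping an 𝓘-set onto an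
interval attain every value on it, so a countable π-network of 𝓘-sets produces `G`. Cutoff functions
from a coarser separable metric then glue members of `G` along finite sets of points, and the sums
of products so obtained form a countable dense set. -/

section ISet

lemma exists_continuousMap_real_surjective (Y : Type*) [TopologicalSpace Y] [MetrizableSpace Y]
    [CompactSpace Y] [Nonempty Y] [TietzeExtension.{0} Y] :
    ∃ P : C(ℝ, Y), Function.Surjective P := by
  let : MetricSpace Y := metrizableSpaceMetric Y
  obtain ⟨F, hF, hFsurj⟩ := exists_nat_bool_continuous_surjective_of_compact Y
  let Q : C(cantorSet, Y) := ⟨F ∘ cantorSetHomeomorphNatToBool, by fun_prop⟩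
  have hQ : Function.Surjective Q := hFsurj.comp cantorSetHomeomorphNatToBool.surjective
  obtain ⟨P, hP⟩ := Q.exists_restrict_eq isClosed_cantorSet
  refine ⟨P, fun y => ?_⟩
  obtain ⟨c, rfl⟩ := hQ y
  exact ⟨c, DFunLike.congr_fun hP c⟩

variable {X : Type*} [TopologicalSpace X] {A : Set X}

lemma IsISet.infinite (hA : IsISet A) : A.Infinite := by
  obtain ⟨f, a, b, -, hab, hsub⟩ := hA
  exact ((Icc_infinite hab).mono hsub).of_image f

lemma isISet_of_countable_of_forall_mem_image {G : Set C(X, ℝ)} (hG : G.Countable)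
    (h : ∀ r : ℝ, ∃ g ∈ G, r ∈ g '' A) : IsISet A := by
  have : Countable G := hG.to_subtype
  obtain ⟨P, hP⟩ := exists_continuousMap_real_surjective (G → unitInterval)
  by_contra hA
  have homit : ∀ g : G, ∃ t : unitInterval, ∀ x ∈ A, P (g.1 x) g ≠ t := by
    intro g
    by_contra! hg
    refine hA ⟨fun x => P (g.1 x) g, 0, 1, by fun_prop, one_pos, fun t ht => ?_⟩
    obtain ⟨x, hx, hxt⟩ := hg ⟨t, ht⟩
    exact ⟨x, hx, congrArg Subtype.val hxt⟩
  choose t ht using homit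
  obtain ⟨c, hc⟩ := hP t
  obtain ⟨g, hg, x, hx, rfl⟩ := h c
  exact ht ⟨g, hg⟩ x hx (congrFun hc _)

lemma IsISet.exists_countable_forall_mem_image (hA : IsISet A) :
    ∃ G : Set C(X, ℝ), G.Countable ∧ ∀ r : ℝ, ∃ g ∈ G, r ∈ g '' A := by
  obtain ⟨f, a, b, hf, hab, hsub⟩ := hA
  let translate (m : ℤ) : C(X, ℝ) := ⟨fun x => f x - m • (b - a), by fun_prop⟩
  refine ⟨range translate, countable_range _, fun r => ?_⟩
  obtain ⟨m, hm, -⟩ := existsUnique_add_zsmul_mem_Ico (sub_pos.2 hab) r a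
  rw [add_sub_cancel] at hm
  obtain ⟨x, hx, hfx⟩ := hsub (Ico_subset_Icc_self hm)
  exact ⟨translate m, mem_range_self m, x, hx, sub_eq_of_eq_add hfx⟩

end ISet

section BiPointOpen

variable {X : Type*} [TopologicalSpace X] {D : Set C(X, ℝ)}

/-- The basic neighbourhood of `f` in the bi-point-open topology given by a finite set `K` of
points, at which values may move by less than `ε`, and a finite set `H` of pairs `(V, r)`, each of
which requires the value `r` to be attained on `V`. It is a neighbourhood only if `0 < ε` and, for
`(V, r) ∈ H`, the set `V` is open and `f` attains `r` on it. -/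
def biPointOpenBox (f : C(X, ℝ)) (K : Finset X) (ε : ℝ) (H : Finset (Set X × ℝ)) :
    Set C(X, ℝ) :=
  {g | (∀ x ∈ K, dist (g x) (f x) < ε) ∧ ∀ p ∈ H, p.2 ∈ g '' p.1}

lemma isOpen_biPointOpenBox (f : C(X, ℝ)) (K : Finset X) (ε : ℝ) {H : Finset (Set X × ℝ)}
    (hH : ∀ p ∈ H, IsOpen p.1) : IsOpen[biPointOpenTopology X] (biPointOpenBox f K ε H) := by
  let := biPointOpenTopology X
  have hbox : biPointOpenBox f K ε H =
      (⋂ x ∈ K, {g | g x ∈ Metric.ball (f x) ε}) ∩ ⋂ p ∈ H, {g | ∃ x ∈ p.1, g x = p.2} := by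
    ext g
    simp [biPointOpenBox]
  rw [hbox]
  exact (isOpen_biInter_finset fun x _ =>
      isOpen_generateFrom_of_mem (.inl ⟨x, _, Metric.isOpen_ball, rfl⟩)).inter
    (isOpen_biInter_finset fun p hp => isOpen_generateFrom_of_mem (.inr ⟨p.1, p.2, hH p hp, rfl⟩))

lemma exists_biPointOpenBox_subset {S : Set C(X, ℝ)} (hS : IsOpen[biPointOpenTopology X] S)
    {f : C(X, ℝ)} (hf : f ∈ S) : ∃ (K : Finset X) (ε : ℝ) (H : Finset (Set X × ℝ)), 0 < ε ∧
      (∀ p ∈ H, IsOpen p.1 ∧ p.2 ∈ f '' p.1) ∧ biPointOpenBox f K ε H ⊆ S := by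
  classical
  induction hS with
  | basic S hS =>
    rcases hS with ⟨x, U, hU, rfl⟩ | ⟨V, r, hV, rfl⟩
    · obtain ⟨ε, hε, hball⟩ := Metric.isOpen_iff.1 hU (f x) hf
      exact ⟨{x}, ε, ∅, hε, by simp, fun g hg => hball (hg.1 x (Finset.mem_singleton_self x))⟩
    · exact ⟨∅, 1, {(V, r)}, one_pos, by simpa using ⟨hV, hf⟩,
        fun g hg => hg.2 (V, r) (Finset.mem_singleton_self _)⟩
  | univ => exact ⟨∅, 1, ∅, one_pos, by simp, subset_univ _⟩
  | inter S T _ _ ihS ihT =>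
    obtain ⟨K, ε, H, hε, hH, hsubS⟩ := ihS hf.1
    obtain ⟨K', ε', H', hε', hH', hsubT⟩ := ihT hf.2
    refine ⟨K ∪ K', min ε ε', H ∪ H', lt_min hε hε', fun p hp => ?_, fun g hg => ⟨?_, ?_⟩⟩
    · exact (Finset.mem_union.1 hp).elim (hH p) (hH' p)
    · exact hsubS ⟨fun x hx => (hg.1 x (Finset.mem_union_left _ hx)).trans_le (min_le_left _ _),
        fun p hp => hg.2 p (Finset.mem_union_left _ hp)⟩
    · exact hsubT ⟨fun x hx => (hg.1 x (Finset.mem_union_right _ hx)).trans_le (min_le_right _ _),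
        fun p hp => hg.2 p (Finset.mem_union_right _ hp)⟩
  | sUnion 𝒮 _ ih =>
    obtain ⟨S, hS, hfS⟩ := hf
    obtain ⟨K, ε, H, hε, hH, hsub⟩ := ih S hS hfS
    exact ⟨K, ε, H, hε, hH, hsub.trans (subset_sUnion_of_mem hS)⟩

lemma dense_biPointOpen_iff : @Dense C(X, ℝ) (biPointOpenTopology X) D ↔
    ∀ (f : C(X, ℝ)) (K : Finset X) (ε : ℝ) (H : Finset (Set X × ℝ)), 0 < ε →
      (∀ p ∈ H, IsOpen p.1 ∧ p.2 ∈ f '' p.1) → (biPointOpenBox f K ε H ∩ D).Nonempty := by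
  let := biPointOpenTopology X
  rw [dense_iff_inter_open]
  constructor
  · intro hD f K ε H hε hH
    exact hD _ (isOpen_biPointOpenBox f K ε fun p hp => (hH p hp).1)
      ⟨f, fun x _ => by rwa [dist_self], fun p hp => (hH p hp).2⟩
  · rintro hD S hS ⟨f, hf⟩
    obtain ⟨K, ε, H, hε, hH, hsub⟩ := exists_biPointOpenBox_subset hS hf
    exact (hD f K ε H hε hH).mono (inter_subset_inter_left D hsub)

/-- A family of continuous functions which attains every real value on every nonempty open set;
equivalently, a family meeting every nonempty subbasic set `[V, r]⁻` of the open-point topology. -/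
def IsLocallySurjectiveFamily (G : Set C(X, ℝ)) : Prop :=
  ∀ U : Set X, IsOpen U → U.Nonempty → ∀ r : ℝ, ∃ g ∈ G, r ∈ g '' U

lemma isLocallySurjectiveFamily_of_dense (hD : @Dense C(X, ℝ) (biPointOpenTopology X) D) :
    IsLocallySurjectiveFamily D := by
  intro U hU hne r
  obtain ⟨g, hg, hgD⟩ := dense_biPointOpen_iff.1 hD (.const X r) ∅ 1 {(U, r)} one_pos
    (by simpa using ⟨hU, hne⟩)
  exact ⟨g, hgD, hg.2 (U, r) (Finset.mem_singleton_self _)⟩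

lemma separatesPoints_of_dense (hX : {f : X → ℝ | Continuous f}.SeparatesPoints)
    (hD : @Dense C(X, ℝ) (biPointOpenTopology X) D) : (DFunLike.coe '' D).SeparatesPoints := by
  classical
  intro x y hxy
  obtain ⟨f, hf, hne⟩ := hX hxy
  obtain ⟨g, hg, hgD⟩ := dense_biPointOpen_iff.1 hD ⟨f, hf⟩ {x, y} (dist (f x) (f y) / 2) ∅
    (half_pos (dist_pos.2 hne)) (by simp)
  have hgx : dist (g x) (f x) < dist (f x) (f y) / 2 := hg.1 x (by simp)
  have hgy : dist (g y) (f y) < dist (f x) (f y) / 2 := hg.1 y (by simp)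
  refine ⟨g, mem_image_of_mem _ hgD, fun heq => ?_⟩
  have htri := dist_triangle_left (f x) (f y) (g x)
  rw [← heq] at hgy
  linarith

lemma IsLocallySurjectiveFamily.isISet {G : Set C(X, ℝ)} (hG : IsLocallySurjectiveFamily G)
    (hGc : G.Countable) {U : Set X} (hU : IsOpen U) (hne : U.Nonempty) : IsISet U :=
  isISet_of_countable_of_forall_mem_image hGc (hG U hU hne)

lemma IsLocallySurjectiveFamily.mono {G G' : Set C(X, ℝ)} (hG : IsLocallySurjectiveFamily G)
    (hGG' : G ⊆ G') : IsLocallySurjectiveFamily G' := fun U hU hne r =>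
  let ⟨g, hg, hr⟩ := hG U hU hne r
  ⟨g, hGG' hg, hr⟩

lemma IsPiNetwork.exists_countable_isLocallySurjectiveFamily {γ : Set (Set X)}
    (hγ : IsPiNetwork γ) (hγc : γ.Countable) (hγI : ∀ A ∈ γ, IsISet A) :
    ∃ G : Set C(X, ℝ), G.Countable ∧ IsLocallySurjectiveFamily G := by
  choose! G hGc hG using fun A hA => (hγI A hA).exists_countable_forall_mem_image
  refine ⟨⋃ A ∈ γ, G A, hγc.biUnion hGc, fun U hU hne r => ?_⟩
  obtain ⟨A, hA, hAU⟩ := hγ.2 U hU hne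
  obtain ⟨g, hg, hr⟩ := hG A hA r
  exact ⟨g, mem_biUnion hA hg, image_mono hAU hr⟩

end BiPointOpen

section Submetrizable

universe u

variable {X Y : Type*} [TopologicalSpace X] [TopologicalSpace Y]

lemma separableSubmetrizable_of_separatesPoints {D : Set C(X, ℝ)} (hDc : D.Countable)
    (hD : (DFunLike.coe '' D).SeparatesPoints) : SeparableSubmetrizable X := by
  have : Countable D := hDc.to_subtype
  let eval : X → D → ℝ := fun x f => f.1 x
  have heval : Continuous eval := by fun_prop
  have hinj : Function.Injective eval := by
    intro x y hxy
    by_contra hne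
    obtain ⟨_, ⟨f, hf, rfl⟩, hfxy⟩ := hD hne
    exact hfxy (congrFun hxy ⟨f, hf⟩)
  refine ⟨.induced eval inferInstance, heval.le_induced, ?_⟩
  let : TopologicalSpace X := .induced eval inferInstance
  have hemb : IsEmbedding eval := ⟨⟨rfl⟩, hinj⟩
  have := hemb.secondCountableTopology
  exact ⟨inferInstance, hemb.metrizableSpace⟩

/-- A family of continuous functions containing, for every finite set `F` and every point `z ∉ F`,
a function that equals `1` near `z` and `0` near each point of `F`. Such functions are used to glue
prescribed functions along a finite set of points. -/
def IsCutoffFamily (Φ : Set C(X, ℝ)) : Prop :=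
  ∀ (F : Finset X) (z : X), z ∉ F → ∃ φ ∈ Φ, φ =ᶠ[𝓝 z] 1 ∧ ∀ w ∈ F, φ =ᶠ[𝓝 w] 0

lemma exists_countable_isCutoffFamily_of_separableSpace (M : Type*) [MetricSpace M]
    [SeparableSpace M] : ∃ Φ : Set C(M, ℝ), Φ.Countable ∧ IsCutoffFamily Φ := by
  obtain ⟨S, hSc, hSd⟩ := exists_countable_dense M
  have : Countable S := hSc.to_subtype
  let cutoff (i : S × ℚ) : C(M, ℝ) :=
    ⟨fun x => max 0 (min 1 (2 - dist x i.1 / i.2)), by fun_prop⟩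
  refine ⟨range cutoff, countable_range _, fun F z hz => ?_⟩
  obtain ⟨δ, hδ, hball⟩ := Metric.isOpen_iff.1 F.finite_toSet.isClosed.isOpen_compl z hz
  obtain ⟨ε, hε, hεδ⟩ := exists_rat_btwn (show (0 : ℝ) < δ / 3 by positivity)
  obtain ⟨p, hpS, hpz⟩ := hSd.exists_dist_lt z hε
  refine ⟨cutoff (⟨p, hpS⟩, ε), mem_range_self _, ?_, fun w hw => ?_⟩
  · have hnear : ∀ᶠ x in 𝓝 z, dist x p < ε :=
      (continuous_id.dist continuous_const).continuousAt.eventually_lt_const hpz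
    filter_upwards [hnear] with x hx
    have hquot : dist x p / ε < 1 := (div_lt_one hε).2 hx
    have hmin : min 1 (2 - dist x p / ε) = 1 := min_eq_left (by linarith)
    simp [cutoff, hmin]
  · have hwz : δ ≤ dist w z := not_lt.1 fun h => hball h hw
    have hwp : 2 * ε < dist w p := by linarith [dist_triangle_right w z p]
    have hfar : ∀ᶠ x in 𝓝 w, 2 * ε < dist x p :=
      (continuous_id.dist continuous_const).continuousAt.eventually_const_lt hwp
    filter_upwards [hfar] with x hx
    have hquot : 2 < dist x p / ε := (lt_div_iff₀ hε).2 hx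
    exact max_eq_left ((min_le_right _ _).trans (by linarith))

lemma IsCutoffFamily.image_comp {Φ : Set C(Y, ℝ)} (hΦ : IsCutoffFamily Φ) {e : C(X, Y)}
    (he : Function.Injective e) : IsCutoffFamily ((fun φ => φ.comp e) '' Φ) := by
  classical
  intro F z hz
  obtain ⟨φ, hφ, hone, hzero⟩ := hΦ (F.image e) (e z) (by simpa [he.eq_iff] using hz)
  exact ⟨φ.comp e, mem_image_of_mem _ hφ, (e.continuous.tendsto z).eventually hone,
    fun w hw => (e.continuous.tendsto w).eventually (hzero _ (Finset.mem_image_of_mem e hw))⟩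

lemma SeparableSubmetrizable.exists_continuousMap_injective {X : Type u} [t : TopologicalSpace X]
    (hX : SeparableSubmetrizable X) :
    ∃ (M : Type u) (_ : MetricSpace M) (_ : SeparableSpace M) (e : C(X, M)),
      Function.Injective e := by
  obtain ⟨t', hle, hsep, hmet⟩ := hX
  exact ⟨X, @metrizableSpaceMetric X t' hmet, hsep,
    @ContinuousMap.mk X X t t' id (continuous_id_iff_le.2 hle), Function.injective_id⟩

lemma SeparableSubmetrizable.exists_countable_isCutoffFamily (hX : SeparableSubmetrizable X) :
    ∃ Φ : Set C(X, ℝ), Φ.Countable ∧ IsCutoffFamily Φ := by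
  obtain ⟨M, _, _, e, he⟩ := hX.exists_continuousMap_injective
  obtain ⟨Φ, hΦc, hΦ⟩ := exists_countable_isCutoffFamily_of_separableSpace M
  exact ⟨_, hΦc.image _, hΦ.image_comp he⟩

end Submetrizable

section Gluing

open scoped Pointwise

lemma countable_addSubmonoidClosure {M : Type*} [AddMonoid M] {s : Set M} (hs : s.Countable) :
    (AddSubmonoid.closure s : Set M).Countable := by
  have : Countable s := hs.to_subtype
  have : Countable (FreeAddMonoid s) := inferInstanceAs (Countable (List s))
  rw [AddSubmonoid.closure_eq_mrange, AddMonoidHom.coe_mrange]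
  exact countable_range _

lemma exists_injective_forall_mem_of_infinite {ι α : Type*} [Finite ι] {V : ι → Set α}
    (hV : ∀ i, (V i).Infinite) : ∃ y : ι → α, Function.Injective y ∧ ∀ i, y i ∈ V i := by
  classical
  have := Fintype.ofFinite ι
  choose t htV htcard using fun i => (hV i).exists_subset_card_eq (Fintype.card ι)
  have hHall : ∀ s : Finset ι, s.card ≤ (s.biUnion t).card := by
    intro s
    rcases s.eq_empty_or_nonempty with rfl | ⟨i, hi⟩
    · simp
    · calc s.card ≤ Fintype.card ι := s.card_le_univ
        _ = (t i).card := (htcard i).symm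
        _ ≤ (s.biUnion t).card := Finset.card_le_card (Finset.subset_biUnion_of_mem t hi)
  obtain ⟨y, hinj, hy⟩ := (Finset.all_card_le_biUnion_card_iff_exists_injective t).1 hHall
  exact ⟨y, hinj, fun i => htV i (hy i)⟩

variable {X : Type*} [TopologicalSpace X] {Φ G : Set C(X, ℝ)}

lemma IsCutoffFamily.exists_eqOn_of_injective (hΦ : IsCutoffFamily Φ) (G : Set C(X, ℝ))
    {ι : Type*} [Finite ι] {z : ι → X} (hz : Function.Injective z) :
    ∃ O : ι → Set X, (∀ i, IsOpen (O i) ∧ z i ∈ O i) ∧ ∀ g : ι → C(X, ℝ), (∀ i, g i ∈ G) →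
      ∃ f ∈ AddSubmonoid.closure (Φ * G), ∀ i, EqOn f (g i) (O i) := by
  classical
  have := Fintype.ofFinite ι
  have hcutoff : ∀ i, ∃ φ ∈ Φ, φ =ᶠ[𝓝 (z i)] 1 ∧ ∀ j, j ≠ i → φ =ᶠ[𝓝 (z j)] 0 := by
    intro i
    obtain ⟨φ, hφ, hone, hzero⟩ := hΦ ((Finset.univ.erase i).image z) (z i) (by simp [hz.eq_iff])
    exact ⟨φ, hφ, hone, fun j hj => hzero _ (Finset.mem_image_of_mem z (by simpa using hj))⟩
  choose φ hφ hone hzero using hcutoff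
  have hnear : ∀ i, ∀ᶠ x in 𝓝 (z i), φ i x = 1 ∧ ∀ j, j ≠ i → φ j x = 0 := fun i =>
    (hone i).and (Filter.eventually_all.2 fun j =>
      Filter.eventually_imp_distrib_left.2 fun hj => hzero j i hj.symm)
  choose O hOsub hO hzO using fun i => mem_nhds_iff.1 (hnear i)
  refine ⟨O, fun i => ⟨hO i, hzO i⟩, fun g hg => ⟨∑ j, φ j * g j, ?_, fun i x hx => ?_⟩⟩
  · exact sum_mem fun j _ => AddSubmonoid.subset_closure (mul_mem_mul (hφ j) (hg j))
  · obtain ⟨hi, hj⟩ := hOsub i hx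
    rw [ContinuousMap.sum_apply, Fintype.sum_eq_single i fun j hji => by simp [hj j hji]]
    simp [hi]

theorem IsCutoffFamily.dense_closure_mul (hΦ : IsCutoffFamily Φ)
    (hG : IsLocallySurjectiveFamily G) (hconst : ∀ q : ℚ, .const X (q : ℝ) ∈ G)
    (hinf : ∀ U : Set X, IsOpen U → U.Nonempty → U.Infinite) :
    @Dense C(X, ℝ) (biPointOpenTopology X) (AddSubmonoid.closure (Φ * G)) := by
  refine dense_biPointOpen_iff.2 fun f K ε H hε hH => ?_
  have hVinf : ∀ p : H, (p.1.1 \ K).Infinite := fun p =>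
    (hinf _ (hH p p.2).1 (Nonempty.of_image ⟨_, (hH p p.2).2⟩)).sdiff K.finite_toSet
  obtain ⟨y, hyinj, hy⟩ := exists_injective_forall_mem_of_infinite hVinf
  have hinj : Function.Injective (Sum.elim ((↑) : K → X) y) :=
    Subtype.val_injective.sumElim hyinj fun x p hxp => (hy p).2 (hxp ▸ x.2)
  obtain ⟨O, hO, hglue⟩ := hΦ.exists_eqOn_of_injective G hinj
  have happrox : ∀ x : K, ∃ g ∈ G, dist (g x) (f x) < ε := by
    intro x
    obtain ⟨q, hq⟩ := Rat.denseRange_cast.exists_dist_lt (f x) hε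
    exact ⟨_, hconst q, by rwa [dist_comm]⟩
  have hattain : ∀ p : H, ∃ g ∈ G, p.1.2 ∈ g '' (O (.inr p) ∩ p.1.1) := fun p =>
    hG _ ((hO (.inr p)).1.inter (hH p p.2).1) ⟨y p, (hO (.inr p)).2, (hy p).1⟩ _
  choose a haG ha using happrox
  choose b hbG hb using hattain
  obtain ⟨h, hh, heq⟩ := hglue (Sum.elim a b) (Sum.rec haG hbG)
  refine ⟨h, ⟨fun x hx => ?_, fun p hp => ?_⟩, hh⟩
  · have hhx : h x = a ⟨x, hx⟩ x := heq (.inl ⟨x, hx⟩) (hO (.inl ⟨x, hx⟩)).2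
    exact hhx ▸ ha ⟨x, hx⟩
  · obtain ⟨u, ⟨huO, huV⟩, hu⟩ := hb ⟨p, hp⟩
    exact ⟨u, huV, (heq (.inr ⟨p, hp⟩) huO).trans hu⟩

theorem IsLocallySurjectiveFamily.separableSpace_biPointOpen (hG : IsLocallySurjectiveFamily G)
    (hGc : G.Countable) (hX : SeparableSubmetrizable X) :
    @SeparableSpace C(X, ℝ) (biPointOpenTopology X) := by
  obtain ⟨Φ, hΦc, hΦ⟩ := hX.exists_countable_isCutoffFamily
  let G' : Set C(X, ℝ) := G ∪ range fun q : ℚ => .const X (q : ℝ)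
  have hG'c : G'.Countable := hGc.union (countable_range _)
  let := biPointOpenTopology X
  exact ⟨AddSubmonoid.closure (Φ * G'), countable_addSubmonoidClosure (hΦc.image2 hG'c _),
    hΦ.dense_closure_mul (hG.mono subset_union_left) (fun q => .inr (mem_range_self q))
      fun U hU hne => (hG.isISet hGc hU hne).infinite⟩

end Gluing

theorem stmt16_general {X : Type*} [TopologicalSpace X]
    (hX : {f : X → ℝ | Continuous f}.SeparatesPoints)
    (hβ : ∃ β : Set (Set X), β.Countable ∧ IsPiBase β) :
    @SeparableSpace C(X, ℝ) (biPointOpenTopology X) ↔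
      (SeparableSubmetrizable X ∧
        ∃ γ : Set (Set X), γ.Countable ∧ IsPiNetwork γ ∧ ∀ A ∈ γ, IsISet A) := by
  constructor
  · intro hsep
    obtain ⟨β, hβc, hβo, hβsub⟩ := hβ
    obtain ⟨D, hDc, hD⟩ := hsep.exists_countable_dense
    refine ⟨separableSubmetrizable_of_separatesPoints hDc (separatesPoints_of_dense hX hD),
      β, hβc, ⟨fun A hA => (hβo A hA).2, hβsub⟩, fun A hA => ?_⟩
    exact (isLocallySurjectiveFamily_of_dense hD).isISet hDc (hβo A hA).1 (hβo A hA).2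
  · rintro ⟨hsub, γ, hγc, hγ, hγI⟩
    obtain ⟨G, hGc, hG⟩ := hγ.exists_countable_isLocallySurjectiveFamily hγc hγI
    exact hG.separableSpace_biPointOpen hGc hsub

/-- For a Tychonoff space with a countable π-base, `C_ph(X)` is separable iff
`X` is separable submetrizable and has a countable π-network of 𝓘-sets. -/
theorem stmt16 {X : Type*} [TopologicalSpace X] [T35Space X]
    (hβ : ∃ β : Set (Set X), β.Countable ∧ IsPiBase β) :
    @SeparableSpace C(X, ℝ) (biPointOpenTopology X) ↔
      (SeparableSubmetrizable X ∧
        ∃ γ : Set (Set X), γ.Countable ∧ IsPiNetwork γ ∧ ∀ A ∈ γ, IsISet A) :=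
  stmt16_general separatesPoints_continuous_of_t35Space hβ
end

section
/- Let X be a Tychonoff space with a countable π-base. Then C_h(X) is separable if and only if X has a countable π-network consisting of 𝓘-sets. -/
open TopologicalSpace Set Topology

/-!
Let `G` map `[0, 1]` continuously onto a set containing the Hilbert cube. If functions `f i` on
countably many sets `A i` take all values in `[0, 1]` between them, some `A i` is an 𝓘-set:
otherwise the `i`-th coordinate of `G ∘ f i` misses some `s i ∈ [0, 1]` on `A i`, and a parameter
`y` with `G y = s` is not a value of any `f i` on `A i`. Taking for the `f i` a countable dense
family shows that every nonempty open set is an 𝓘-set when `C_h(X)` is separable; taking them all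
equal shows that one of any countably many sets covering an 𝓘-set is again an 𝓘-set.

Conversely, for finitely many 𝓘-sets there is one continuous function mapping each of them onto a
set containing a prescribed interval. Inductively, let `g` do so for `[0, 1]` and let `B` be one
more 𝓘-set. Then `B ∩ {g ≤ 1/2}` or `B ∩ {g ≥ 1/2}` is an 𝓘-set, and the other half of `[0, 1]`
contains a closed interval whose preimage under `g` serves the old sets. The two demands can be met
together by a cutoff that is a function of `g`. Choosing such a function for each finite part of a
countable π-network and each interval `[-m, m]` gives a countable dense set.
-/

lemma exists_subset_image_Icc_of_isCompact {E : Type*} [TopologicalSpace E] [MetrizableSpace E]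
    [TietzeExtension.{0} E] {K : Set E} (hK : IsCompact K) (hne : K.Nonempty) :
    ∃ G : C(ℝ, E), K ⊆ G '' Icc 0 1 := by
  let : MetricSpace E := metrizableSpaceMetric E
  have := isCompact_iff_compactSpace.1 hK
  have := hne.to_subtype
  obtain ⟨F, hF, hsurj⟩ := exists_nat_bool_continuous_surjective_of_compact K
  let H : C(cantorSet, E) := ⟨fun c => F (cantorSetHomeomorphNatToBool c),
    continuous_subtype_val.comp (hF.comp cantorSetHomeomorphNatToBool.continuous)⟩
  obtain ⟨G, hG⟩ := H.exists_restrict_eq isClosed_cantorSet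
  refine ⟨G, fun p hp => ?_⟩
  obtain ⟨z, hz⟩ := hsurj ⟨p, hp⟩
  let c : cantorSet := cantorSetHomeomorphNatToBool.symm z
  refine ⟨c, cantorSet_subset_unitInterval c.2, ?_⟩
  calc G c = H c := DFunLike.congr_fun hG c
    _ = p := by simp [H, c, hz]

lemma exists_continuousMap_Icc_subset_image_Icc {a b : ℝ} (hab : a < b) (c d : ℝ) :
    ∃ φ : C(ℝ, ℝ), Icc c d ⊆ φ '' Icc a b := by
  let φ : C(ℝ, ℝ) := ⟨fun t => c + (t - a) / (b - a) * (d - c), by fun_prop⟩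
  have hφa : φ a = c := by simp [φ]
  have hφb : φ b = d := by simp [φ, div_self (sub_pos.2 hab).ne']
  refine ⟨φ, ?_⟩
  simpa only [hφa, hφb] using intermediate_value_Icc hab.le φ.continuous.continuousOn

section

variable {X : Type*} [TopologicalSpace X]

lemma IsISet.exists_Icc_subset_image {A : Set X} (hA : IsISet A) (c d : ℝ) :
    ∃ f : C(X, ℝ), Icc c d ⊆ f '' A := by
  obtain ⟨f, a, b, hf, hab, hsub⟩ := hA
  obtain ⟨φ, hφ⟩ := exists_continuousMap_Icc_subset_image_Icc hab c d
  refine ⟨φ.comp ⟨f, hf⟩, hφ.trans ?_⟩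
  simpa only [ContinuousMap.coe_comp, ContinuousMap.coe_mk, image_comp] using image_mono hsub

lemma exists_isISet_of_Icc_subset_iUnion_image {ι : Type*} [Countable ι] {A : ι → Set X}
    {f : ι → C(X, ℝ)} (hf : Icc 0 1 ⊆ ⋃ i, f i '' A i) : ∃ i, IsISet (A i) := by
  obtain ⟨G, hG⟩ := exists_subset_image_Icc_of_isCompact
    (isCompact_univ_pi fun _ : ι => isCompact_Icc (a := (0 : ℝ)) (b := 1))
    (univ_pi_nonempty_iff.2 fun _ => nonempty_Icc.2 zero_le_one)
  by_contra! hA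
  have hmiss : ∀ i, ∃ s ∈ Icc (0 : ℝ) 1, s ∉ (fun x => G (f i x) i) '' A i := fun i =>
    not_subset.1 fun hsub => hA i ⟨_, 0, 1, by fun_prop, one_pos, hsub⟩
  choose s hs hs_miss using hmiss
  obtain ⟨y, hy, hGy⟩ := hG fun i _ => hs i
  obtain ⟨i, x, hx, hxy⟩ := mem_iUnion.1 (hf hy)
  exact hs_miss i ⟨x, hx, by simp only [hxy, hGy]⟩

lemma IsISet.exists_of_subset_iUnion {ι : Type*} [Countable ι] {A : Set X} {B : ι → Set X}
    (hA : IsISet A) (hAB : A ⊆ ⋃ i, B i) : ∃ i, IsISet (B i) := by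
  obtain ⟨f, hf⟩ := hA.exists_Icc_subset_image 0 1
  refine exists_isISet_of_Icc_subset_iUnion_image (f := fun _ => f) ?_
  simpa only [image_iUnion] using hf.trans (image_mono hAB)

lemma IsISet.or_of_subset_union {A B C : Set X} (hA : IsISet A) (h : A ⊆ B ∪ C) :
    IsISet B ∨ IsISet C := by
  rw [union_eq_iUnion] at h
  exact (Bool.exists_bool.1 (hA.exists_of_subset_iUnion h)).symm

lemma exists_continuousMap_eqOn_preimage {Y : Type*} [TopologicalSpace Y] [NormalSpace Y]
    {K L : Set Y} (hK : IsClosed K) (hL : IsClosed L) (hKL : Disjoint K L) (g : C(X, Y))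
    (h₁ h₂ : C(X, ℝ)) : ∃ k : C(X, ℝ), EqOn k h₁ (g ⁻¹' K) ∧ EqOn k h₂ (g ⁻¹' L) := by
  obtain ⟨θ, hθK, hθL, -⟩ := exists_continuous_zero_one_of_isClosed hK hL hKL
  refine ⟨h₁ + θ.comp g * (h₂ - h₁), fun x hx => ?_, fun x hx => ?_⟩
  · simp [hθK hx]
  · simp [hθL hx]

lemma IsISet.exists_preimage_disjoint_Icc {A : Set X} (hA : IsISet A) (g : C(X, ℝ)) :
    ∃ (K : Set ℝ) (a b : ℝ), IsClosed K ∧ IsISet (A ∩ g ⁻¹' K) ∧ a < b ∧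
      Icc a b ⊆ Icc 0 1 ∧ Disjoint K (Icc a b) := by
  have hcover : A ⊆ A ∩ g ⁻¹' Iic (1 / 2) ∪ A ∩ g ⁻¹' Ici (1 / 2) := by
    rw [← inter_union_distrib_left, ← preimage_union, Iic_union_Ici, preimage_univ, inter_univ]
  rcases hA.or_of_subset_union hcover with h | h
  · refine ⟨Iic (1 / 2), 2 / 3, 1, isClosed_Iic, h, by norm_num,
      Icc_subset_Icc_left (by norm_num), disjoint_left.2 fun t ht ht' => ?_⟩
    linarith [mem_Iic.1 ht, ht'.1]
  · refine ⟨Ici (1 / 2), 0, 1 / 3, isClosed_Ici, h, by norm_num,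
      Icc_subset_Icc_right (by norm_num), disjoint_left.2 fun t ht ht' => ?_⟩
    linarith [mem_Ici.1 ht, ht'.2]

lemma IsISet.exists_forall_insert_Icc_subset_image {B : Set X} (hB : IsISet B)
    {S : Set (Set X)} {g : C(X, ℝ)} (hg : ∀ A ∈ S, Icc 0 1 ⊆ g '' A) (c d : ℝ) :
    ∃ k : C(X, ℝ), ∀ A ∈ insert B S, Icc c d ⊆ k '' A := by
  obtain ⟨K, a, b, hK, hBK, hab, hsub, hdisj⟩ := hB.exists_preimage_disjoint_Icc g
  obtain ⟨h, hh⟩ := hBK.exists_Icc_subset_image c d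
  obtain ⟨φ, hφ⟩ := exists_continuousMap_Icc_subset_image_Icc hab c d
  obtain ⟨k, hkh, hkφ⟩ := exists_continuousMap_eqOn_preimage hK isClosed_Icc hdisj g h (φ.comp g)
  refine ⟨k, forall_mem_insert.2 ⟨fun r hr => ?_, fun A hA r hr => ?_⟩⟩
  · obtain ⟨x, ⟨hxB, hxK⟩, rfl⟩ := hh hr
    exact ⟨x, hxB, hkh hxK⟩
  · obtain ⟨t, ht, rfl⟩ := hφ hr
    obtain ⟨x, hxA, rfl⟩ := hg A hA (hsub ht)
    exact ⟨x, hxA, hkφ ht⟩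

lemma exists_forall_Icc_subset_image_of_finite {S : Set (Set X)} (hS : S.Finite)
    (hI : ∀ A ∈ S, IsISet A) (c d : ℝ) : ∃ g : C(X, ℝ), ∀ A ∈ S, Icc c d ⊆ g '' A := by
  induction S, hS using Set.Finite.induction_on generalizing c d with
  | empty => exact ⟨0, by simp⟩
  | insert _ _ ih =>
    obtain ⟨hB, hS⟩ := forall_mem_insert.1 hI
    obtain ⟨g, hg⟩ := ih hS 0 1
    exact hB.exists_forall_insert_Icc_subset_image hg c d

lemma isISet_of_separableSpace_openPointTopology
    (hsep : @SeparableSpace C(X, ℝ) (openPointTopology X)) {V : Set X} (hV : IsOpen V)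
    (hne : V.Nonempty) : IsISet V := by
  let := openPointTopology X
  obtain ⟨D, hDc, hD⟩ := exists_countable_dense C(X, ℝ)
  have := hDc.to_subtype
  obtain ⟨x, hx⟩ := hne
  have hcover : Icc (0 : ℝ) 1 ⊆ ⋃ f : D, f.1 '' V := fun r _ => by
    have hopen : IsOpen {f : C(X, ℝ) | ∃ x ∈ V, f x = r} :=
      isOpen_generateFrom_of_mem ⟨V, r, hV, rfl⟩
    obtain ⟨f, hf, hfD⟩ := hD.inter_open_nonempty _ hopen ⟨ContinuousMap.const X r, x, hx, rfl⟩
    exact mem_iUnion.2 ⟨⟨f, hfD⟩, hf⟩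
  obtain ⟨-, hVI⟩ := exists_isISet_of_Icc_subset_iUnion_image hcover
  exact hVI

lemma dense_openPointTopology_of_isPiNetwork {γ : Set (Set X)} (hγ : IsPiNetwork γ)
    {D : Set C(X, ℝ)}
    (hD : ∀ S ⊆ γ, S.Finite → ∀ m : ℕ, ∃ f ∈ D, ∀ A ∈ S, Icc (-m : ℝ) m ⊆ f '' A) :
    @Dense _ (openPointTopology X) D := by
  let := openPointTopology X
  rw [(isTopologicalBasis_of_subbasis (t := openPointTopology X) rfl).dense_iff]
  rintro _ ⟨F, ⟨hFfin, hF⟩, rfl⟩ ⟨g, hg⟩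
  have := hFfin.to_subtype
  choose V r hV hVr using fun W : F => hF W.2
  have hne : ∀ W, (V W).Nonempty := fun W => by
    obtain ⟨x, hx, -⟩ := (hVr W).subset (hg W.1 W.2)
    exact ⟨x, hx⟩
  choose A hAγ hAV using fun W => hγ.2 (V W) (hV W) (hne W)
  obtain ⟨M, hM⟩ := (finite_range fun W => |r W|).bddAbove
  obtain ⟨m, hm⟩ := exists_nat_ge M
  obtain ⟨f, hfD, hf⟩ := hD (range A) (range_subset_iff.2 hAγ) (finite_range A) m
  refine ⟨f, fun W hW => ?_, hfD⟩
  have hr : |r ⟨W, hW⟩| ≤ m := (hM (mem_range_self _)).trans hm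
  obtain ⟨x, hx, hxr⟩ := hf _ (mem_range_self ⟨W, hW⟩) (abs_le.1 hr)
  exact (hVr ⟨W, hW⟩).superset ⟨x, hAV _ hx, hxr⟩

lemma separableSpace_openPointTopology_of_isPiNetwork {γ : Set (Set X)} (hγc : γ.Countable)
    (hγ : IsPiNetwork γ) (hI : ∀ A ∈ γ, IsISet A) :
    @SeparableSpace C(X, ℝ) (openPointTopology X) := by
  let T : Set (Set (Set X)) := {S | S.Finite ∧ S ⊆ γ}
  have : Countable T := (countable_ofPred_finite_subset hγc).to_subtype
  have hex : ∀ p : T × ℕ, ∃ f : C(X, ℝ), ∀ A ∈ p.1.1, Icc (-p.2 : ℝ) p.2 ⊆ f '' A := fun p =>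
    exists_forall_Icc_subset_image_of_finite p.1.2.1 (fun A hA => hI A (p.1.2.2 hA)) _ _
  choose d hd using hex
  let := openPointTopology X
  exact ⟨range d, countable_range d, dense_openPointTopology_of_isPiNetwork hγ
    fun S hSγ hS m => ⟨_, mem_range_self (⟨S, hS, hSγ⟩, m), hd (⟨S, hS, hSγ⟩, m)⟩⟩

theorem stmt17_general (hβ : ∃ β : Set (Set X), β.Countable ∧ IsPiBase β) :
    @SeparableSpace C(X, ℝ) (openPointTopology X) ↔
      ∃ γ : Set (Set X), γ.Countable ∧ IsPiNetwork γ ∧ ∀ A ∈ γ, IsISet A := by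
  constructor
  · intro hsep
    obtain ⟨β, hβc, hβ, hβsub⟩ := hβ
    exact ⟨β, hβc, ⟨fun V hV => (hβ V hV).2, hβsub⟩, fun V hV =>
      isISet_of_separableSpace_openPointTopology hsep (hβ V hV).1 (hβ V hV).2⟩
  · rintro ⟨γ, hγc, hγ, hI⟩
    exact separableSpace_openPointTopology_of_isPiNetwork hγc hγ hI

end

/-- For a Tychonoff space with a countable π-base, `C_h(X)` is separable iff
`X` has a countable π-network of 𝓘-sets. -/
theorem stmt17 {X : Type*} [TopologicalSpace X] [T35Space X]
    (hβ : ∃ β : Set (Set X), β.Countable ∧ IsPiBase β) :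
    @SeparableSpace C(X, ℝ) (openPointTopology X) ↔
      ∃ γ : Set (Set X), γ.Countable ∧ IsPiNetwork γ ∧ ∀ A ∈ γ, IsISet A :=
  stmt17_general hβ
end
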